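/- arXiv:1112.5134 — 2 statements merged into one kernel-verified Lean document; each statement's English description precedes it below -/
import Mathlib

section
/- Let G be a connected graph with a cut vertex and let G = H₁ ∨ H₂ be a corresponding decomposition. Then for every D₁ ∈ Div(H₁) and D₂ ∈ Div(H₂), the rank satisfies r_G(D₁ + D₂) ≥ min{ r_{H₁}(D₁), r_{H₂}(D₂) }. -/
/-- A finite multigraph: vertices `V`, edges `E`, each edge has an (arbitrarily
ordered) pair of endpoints.  Loops are edges whose two endpoints coincide. -/
structure Multigraph where
  V : Type
  E : Type
  [decV : DecidableEq V]
  [fintV : Fintype V]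
  [decE : DecidableEq E]
  [fintE : Fintype E]
  ends : E → V × V

attribute [instance] Multigraph.decV Multigraph.fintV Multigraph.decE Multigraph.fintE

namespace Multigraph

variable (G : Multigraph)

/-- Two vertices are adjacent if some edge joins them. -/
def Adj (v w : G.V) : Prop := ∃ e : G.E, G.ends e = (v, w) ∨ G.ends e = (w, v)

/-- A multigraph is connected if it is nonempty and any two vertices are joined by a walk. -/
def Connected : Prop := Nonempty G.V ∧ ∀ v w : G.V, Relation.ReflTransGen G.Adj v w

/-- The number of edges joining `v` and `w`. -/
def numEdges (v w : G.V) : ℕ :=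
  (Finset.univ.filter fun e : G.E => G.ends e = (v, w) ∨ G.ends e = (w, v)).card

/-- The number of loops based at `v`. -/
def numLoops (v : G.V) : ℕ :=
  (Finset.univ.filter fun e : G.E => G.ends e = (v, v)).card

/-- The valency of `v` (loops count twice). -/
def valency (v : G.V) : ℕ :=
  ∑ e : G.E, ((if (G.ends e).1 = v then 1 else 0) + (if (G.ends e).2 = v then 1 else 0))

/-- The intersection product on vertices: `(v·w)` is the number of edges joining `v` and
`w` when `v ≠ w`, and `(v·v) = -val(v) + 2 loop(v)`. -/
def inter (v w : G.V) : ℤ :=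
  if v = w then -(G.valency v : ℤ) + 2 * (G.numLoops v : ℤ) else (G.numEdges v w : ℤ)

/-- The principal divisor `T_v = Σ_w (v·w) w`. -/
def T (v : G.V) : G.V → ℤ := fun w => G.inter v w

/-- The group of principal divisors, generated by the `T_v`. -/
def Prin : AddSubgroup (G.V → ℤ) := AddSubgroup.closure (Set.range G.T)

/-- The Jacobian group `Div(G)/Prin(G)`. -/
abbrev Jac := (G.V → ℤ) ⧸ G.Prin

/-- A divisor is effective if all its coefficients are nonnegative. -/
def Effective {α : Type} (D : α → ℤ) : Prop := ∀ v, 0 ≤ D v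

/-- The degree of a divisor. -/
def degree {α : Type} [Fintype α] (D : α → ℤ) : ℤ := ∑ v, D v

/-- The Baker–Norine rank of a divisor: `-1` if no effective divisor is linearly
equivalent to `D`, and otherwise the largest `k ≥ 0` such that for every effective
divisor `E` of degree `k` some effective divisor is linearly equivalent to `D - E`. -/
noncomputable def rank (D : G.V → ℤ) : ℤ :=
  sSup {r : ℤ | r = -1 ∨ (0 ≤ r ∧ ∀ E : G.V → ℤ, Effective E → degree E = r →
      ∃ F : G.V → ℤ, Effective F ∧ D - E - F ∈ G.Prin)}

/-- An edge is a loop if its two endpoints coincide. -/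
def IsLoop (e : G.E) : Prop := (G.ends e).1 = (G.ends e).2

/-- The refinement of `G` obtained by inserting `n e` new vertices in the interior of
each edge `e` (subdividing `e` into `n e + 1` edges). -/
def subdivide (n : G.E → ℕ) : Multigraph where
  V := G.V ⊕ (Σ e : G.E, Fin (n e))
  E := Σ e : G.E, Fin (n e + 1)
  ends := fun x =>
    (if h : (x.2 : ℕ) = 0 then Sum.inl (G.ends x.1).1
        else Sum.inr ⟨x.1, ⟨(x.2 : ℕ) - 1, by have := x.2.isLt; omega⟩⟩,
     if h : (x.2 : ℕ) = n x.1 then Sum.inl (G.ends x.1).2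
        else Sum.inr ⟨x.1, ⟨(x.2 : ℕ), by have := x.2.isLt; omega⟩⟩)

/-- The natural map `σ* : Div(G) → Div(G̃)` to a refinement, extending a divisor by
zero on the new vertices. -/
def subdivMap (n : G.E → ℕ) (D : G.V → ℤ) : (G.subdivide n).V → ℤ := Sum.elim D 0

/-- `Ĝ`: the loopless refinement obtained by inserting one new vertex in the interior of
every loop-edge. -/
def hat : Multigraph := G.subdivide fun e => if (G.ends e).1 = (G.ends e).2 then 1 else 0

/-- The rank `r#_G(D) := r_{Ĝ}(σ* D)`. -/
noncomputable def rankSharp (D : G.V → ℤ) : ℤ :=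
  G.hat.rank (G.subdivMap (fun e => if (G.ends e).1 = (G.ends e).2 then 1 else 0) D)

/-- A multigraph is loopless if no edge is a loop. -/
def Loopless : Prop := ∀ e : G.E, (G.ends e).1 ≠ (G.ends e).2

/-- The genus (first Betti number) `g = |E| - |V| + 1` of a connected graph. -/
def genus : ℤ := (Fintype.card G.E : ℤ) - (Fintype.card G.V : ℤ) + 1

/-- The canonical divisor `K#_G = Σ_v (val(v) - 2) v`. -/
def canonical : G.V → ℤ := fun v => (G.valency v : ℤ) - 2

/-- The loopless graph obtained from `G` by removing all loop-edges. -/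
def removeLoops : Multigraph where
  V := G.V
  E := {e : G.E // (G.ends e).1 ≠ (G.ends e).2}
  ends := fun e => G.ends e.1

/-- The virtual graph `G^ω` of a weighted graph `(G, ω)`: attach `ω v` loops at each
vertex `v`. -/
def virt (w : G.V → ℕ) : Multigraph where
  V := G.V
  E := G.E ⊕ (Σ v : G.V, Fin (w v))
  ends := Sum.elim G.ends fun p => (p.1, p.1)

/-- The rank of a divisor on the weighted graph `(G, ω)`: `r_{(G,ω)}(D) := r#_{G^ω}(D)`. -/
noncomputable def rankW (w : G.V → ℕ) (D : G.V → ℤ) : ℤ := (G.virt w).rankSharp D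

/-- The canonical divisor of the weighted graph `(G, ω)`. -/
def canonicalW (w : G.V → ℕ) : G.V → ℤ := fun v => (G.valency v : ℤ) + 2 * (w v : ℤ) - 2

/-- The genus of the weighted graph `(G, ω)`: `b₁(G) + Σ_v ω(v)`. -/
def genusW (w : G.V → ℕ) : ℤ := G.genus + ∑ v, (w v : ℤ)

/-- The rose `R_g`: one vertex and `g` loop-edges. -/
def rose (g : ℕ) : Multigraph where
  V := Unit
  E := Fin g
  ends := fun _ => ((), ())

/-- The subgraph of `G` determined by a set of vertices and a set of edges with
endpoints among them. -/
def subgraph (Vs : Finset G.V) (Es : Finset G.E)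
    (h : ∀ e ∈ Es, (G.ends e).1 ∈ Vs ∧ (G.ends e).2 ∈ Vs) : Multigraph where
  V := {x : G.V // x ∈ Vs}
  E := {e : G.E // e ∈ Es}
  ends := fun e => (⟨(G.ends e.1).1, (h e.1 e.2).1⟩, ⟨(G.ends e.1).2, (h e.1 e.2).2⟩)

/-- Extension of a divisor on a subgraph by zero: `ι_* : Div(H) → Div(G)`. -/
def iota (Vs : Finset G.V) (D : {x : G.V // x ∈ Vs} → ℤ) : G.V → ℤ :=
  fun x => if h : x ∈ Vs then D ⟨x, h⟩ else 0

end Multigraph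

namespace Multigraph

/-- A decomposition `G = H₁ ∨ H₂` of `G` associated to a cut vertex `v`:  `H₁`, `H₂` are
connected subgraphs with `V(H₁) ∩ V(H₂) = {v}`, `E(H₁) ∩ E(H₂) = ∅`, covering `G`. -/
structure Wedge (G : Multigraph) where
  v : G.V
  V1 : Finset G.V
  V2 : Finset G.V
  hv1 : v ∈ V1
  hv2 : v ∈ V2
  E1 : Finset G.E
  E2 : Finset G.E
  cover_V : V1 ∪ V2 = Finset.univ
  inter_V : V1 ∩ V2 = {v}
  cover_E : E1 ∪ E2 = Finset.univ
  disj_E : E1 ∩ E2 = ∅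
  ends1 : ∀ e ∈ E1, (G.ends e).1 ∈ V1 ∧ (G.ends e).2 ∈ V1
  ends2 : ∀ e ∈ E2, (G.ends e).1 ∈ V2 ∧ (G.ends e).2 ∈ V2
  conn1 : (G.subgraph V1 E1 ends1).Connected
  conn2 : (G.subgraph V2 E2 ends2).Connected

/-- The first subgraph `H₁` of a wedge decomposition. -/
def Wedge.H1 {G : Multigraph} (W : G.Wedge) : Multigraph := G.subgraph W.V1 W.E1 W.ends1

/-- The second subgraph `H₂` of a wedge decomposition. -/
def Wedge.H2 {G : Multigraph} (W : G.Wedge) : Multigraph := G.subgraph W.V2 W.E2 W.ends2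

variable (G : Multigraph)

/-- The divisor `div(f)` of an integer-valued function `f` on the vertices
(loops contribute zero). -/
def divOf (f : G.V → ℤ) : G.V → ℤ := fun v =>
  ∑ e : G.E, ((if (G.ends e).1 = v then f v - f (G.ends e).2 else 0)
            + (if (G.ends e).2 = v then f v - f (G.ends e).1 else 0))

/-- An isomorphism of multigraphs (edges may be matched with either orientation). -/
structure Iso (G H : Multigraph) where
  vEquiv : G.V ≃ H.V
  eEquiv : G.E ≃ H.E
  compat : ∀ e : G.E,
    H.ends (eEquiv e) = (vEquiv (G.ends e).1, vEquiv (G.ends e).2) ∨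
    H.ends (eEquiv e) = (vEquiv (G.ends e).2, vEquiv (G.ends e).1)

end Multigraph

/-!
The intersection product of a multigraph is minus its Laplacian, which is symmetric and has zero row
sums; hence principal divisors have degree `0` and `Σ_u T_u = 0`. If a subgraph `H` of `G` is
attached to the rest of `G` at the vertex `v` only, then `T_u` is the same divisor in `H` and in `G`
for every vertex `u ≠ v` of `H`, and in `H` the remaining `T_v` is minus the sum of the others.
Extension by zero therefore maps `Prin(H)` into `Prin(G)`.
Now split an effective divisor `E` of degree `k` on `G` into effective divisors `A` on `H₁` and `B`
on `H₂`. Both have degree at most `k`, so if `D₁` and `D₂` have rank at least `k`, then `D₁ - A` and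
`D₂ - B` are equivalent to effective divisors, whose sum is equivalent to `D₁ + D₂ - E`.
-/

namespace Multigraph

section Divisors

variable {α : Type}

lemma Effective.add {D D' : α → ℤ} (hD : Effective D) (hD' : Effective D') : Effective (D + D') :=
  fun v ↦ add_nonneg (hD v) (hD' v)

lemma effective_single [DecidableEq α] (v : α) {k : ℤ} (hk : 0 ≤ k) :
    Effective (Pi.single v k : α → ℤ) :=
  show (0 : α → ℤ) ≤ Pi.single v k from Pi.single_nonneg.2 hk

variable [Fintype α]

lemma Effective.degree_nonneg {D : α → ℤ} (hD : Effective D) : 0 ≤ degree D :=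
  Finset.sum_nonneg fun v _ ↦ hD v

variable (α) in
/-- The degree map `deg : Div → ℤ` as a homomorphism of groups. -/
def degreeHom : (α → ℤ) →+ ℤ where
  toFun := degree
  map_zero' := Finset.sum_const_zero
  map_add' _ _ := Finset.sum_add_distrib

lemma degree_add (D D' : α → ℤ) : degree (D + D') = degree D + degree D' :=
  map_add (degreeHom α) D D'

lemma degree_sub (D D' : α → ℤ) : degree (D - D') = degree D - degree D' :=
  map_sub (degreeHom α) D D'

lemma degree_single [DecidableEq α] (v : α) (k : ℤ) : degree (Pi.single v k) = k :=
  Finset.sum_pi_single' .. |>.trans (if_pos (Finset.mem_univ v))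

end Divisors

section Laplacian

variable (G : Multigraph)

/-- The coefficient of `v` in the boundary of the edge `e`, oriented from its second endpoint to its
first; it vanishes if `e` is a loop. -/
def orientedIncidence (e : G.E) (v : G.V) : ℤ :=
  (if (G.ends e).1 = v then 1 else 0) - (if (G.ends e).2 = v then 1 else 0)

lemma orientedIncidence_eq_zero {G : Multigraph} {e : G.E} {v : G.V} (h₁ : (G.ends e).1 ≠ v)
    (h₂ : (G.ends e).2 ≠ v) : G.orientedIncidence e v = 0 := by
  simp [orientedIncidence, h₁, h₂]

lemma sum_orientedIncidence (e : G.E) : ∑ v, G.orientedIncidence e v = 0 := by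
  simp [orientedIncidence, Finset.sum_sub_distrib]

lemma inter_eq_neg_sum_orientedIncidence_mul (v w : G.V) :
    G.inter v w = -∑ e, G.orientedIncidence e v * G.orientedIncidence e w := by
  rw [← Finset.sum_neg_distrib]
  by_cases hvw : v = w
  · subst hvw
    simp only [inter, valency, numLoops, orientedIncidence, Finset.card_filter, Prod.ext_iff,
      if_true]
    push_cast
    rw [Finset.mul_sum, ← Finset.sum_neg_distrib, ← Finset.sum_add_distrib]
    refine Finset.sum_congr rfl fun e _ ↦ ?_
    by_cases h₁ : (G.ends e).1 = v <;> by_cases h₂ : (G.ends e).2 = v <;> simp [h₁, h₂]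
  · simp only [inter, numEdges, orientedIncidence, Finset.card_filter, Prod.ext_iff, if_neg hvw]
    push_cast
    refine Finset.sum_congr rfl fun e _ ↦ ?_
    by_cases h₁ : (G.ends e).1 = v <;> by_cases h₂ : (G.ends e).2 = v <;> grind

lemma inter_comm (v w : G.V) : G.inter v w = G.inter w v := by
  simp only [inter_eq_neg_sum_orientedIncidence_mul, mul_comm]

lemma degree_T (v : G.V) : degree (G.T v) = 0 := by
  simp only [degree, T, inter_eq_neg_sum_orientedIncidence_mul, Finset.sum_neg_distrib]
  rw [Finset.sum_comm]
  simp only [← Finset.mul_sum, sum_orientedIncidence, mul_zero, Finset.sum_const_zero, neg_zero]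

lemma sum_T : ∑ v, G.T v = 0 := by
  funext w
  calc (∑ v, G.T v) w = ∑ v, G.inter v w := Finset.sum_apply ..
    _ = degree (G.T w) := Finset.sum_congr rfl fun v _ ↦ G.inter_comm v w
    _ = 0 := G.degree_T w

lemma T_mem_prin (v : G.V) : G.T v ∈ G.Prin :=
  AddSubgroup.subset_closure ⟨v, rfl⟩

variable {G}

lemma degree_eq_zero_of_mem_prin {D : G.V → ℤ} (hD : D ∈ G.Prin) : degree D = 0 := by
  have hle : G.Prin ≤ (degreeHom G.V).ker :=
    (AddSubgroup.closure_le _).2 <| Set.range_subset_iff.2 G.degree_T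
  exact hle hD

end Laplacian

section Rank

variable (G : Multigraph)

/-- The linear system `|D|` is nonempty, i.e. `D` is linearly equivalent to an effective divisor. -/
def EquivEffective (D : G.V → ℤ) : Prop :=
  ∃ F : G.V → ℤ, Effective F ∧ D - F ∈ G.Prin

/-- `|D - E|` is nonempty for all effective divisors `E` of degree `k`. For `k ≥ 0` this is the
condition whose largest solution is the rank of `D`; for `k < 0` it is vacuous. -/
def HasRankAtLeast (D : G.V → ℤ) (k : ℤ) : Prop :=
  ∀ E : G.V → ℤ, Effective E → degree E = k → G.EquivEffective (D - E)

variable {G} {D D' E : G.V → ℤ} {j k : ℤ}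

lemma Effective.equivEffective (hE : Effective E) : G.EquivEffective E :=
  ⟨E, hE, by simp [zero_mem]⟩

lemma EquivEffective.add (hD : G.EquivEffective D) (hD' : G.EquivEffective D') :
    G.EquivEffective (D + D') := by
  obtain ⟨F, hF, hDF⟩ := hD
  obtain ⟨F', hF', hDF'⟩ := hD'
  exact ⟨F + F', hF.add hF', by simpa only [add_sub_add_comm] using add_mem hDF hDF'⟩

lemma EquivEffective.degree_nonneg (hD : G.EquivEffective D) : 0 ≤ degree D := by
  obtain ⟨F, hF, hDF⟩ := hD
  have hdeg : degree D - degree F = 0 := by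
    rw [← degree_sub, degree_eq_zero_of_mem_prin hDF]
  linarith [hF.degree_nonneg]

lemma HasRankAtLeast.mono [Nonempty G.V] (h : G.HasRankAtLeast D k) (hjk : j ≤ k) :
    G.HasRankAtLeast D j := by
  intro E hE hdeg
  obtain ⟨v⟩ := ‹Nonempty G.V›
  have hP : Effective (Pi.single v (k - j) : G.V → ℤ) := effective_single v (sub_nonneg.2 hjk)
  have hDEP : G.EquivEffective (D - (E + Pi.single v (k - j))) :=
    h _ (hE.add hP) (by rw [degree_add, degree_single, hdeg, add_sub_cancel])
  simpa only [sub_add_eq_sub_sub, sub_add_cancel] using hDEP.add hP.equivEffective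

lemma HasRankAtLeast.le_degree [Nonempty G.V] (h : G.HasRankAtLeast D k) (hk : 0 ≤ k) :
    k ≤ degree D := by
  obtain ⟨v⟩ := ‹Nonempty G.V›
  have hnonneg := (h _ (effective_single v hk) (degree_single v k)).degree_nonneg
  rwa [degree_sub, degree_single, sub_nonneg] at hnonneg

lemma bddAbove_rank_set [Nonempty G.V] (D : G.V → ℤ) :
    BddAbove {r : ℤ | r = -1 ∨ 0 ≤ r ∧ G.HasRankAtLeast D r} := by
  refine ⟨max (-1) (degree D), ?_⟩
  rintro r (rfl | ⟨hr, h⟩)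
  · exact le_max_left _ _
  · exact (h.le_degree hr).trans (le_max_right _ _)

lemma neg_one_le_rank [Nonempty G.V] (D : G.V → ℤ) : -1 ≤ G.rank D :=
  le_csSup (bddAbove_rank_set D) (Or.inl rfl)

lemma le_rank_iff [Nonempty G.V] (hk : 0 ≤ k) : k ≤ G.rank D ↔ G.HasRankAtLeast D k := by
  refine ⟨fun hle ↦ ?_, fun h ↦ le_csSup (bddAbove_rank_set D) (Or.inr ⟨hk, h⟩)⟩
  have hmem : G.rank D = -1 ∨ 0 ≤ G.rank D ∧ G.HasRankAtLeast D (G.rank D) :=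
    Int.csSup_mem ⟨-1, Or.inl rfl⟩ (bddAbove_rank_set D)
  rcases hmem with hneg | ⟨-, h⟩
  · omega
  · exact h.mono hle

lemma equivEffective_sub_of_degree_le_rank [Nonempty G.V] (hE : Effective E)
    (hle : degree E ≤ G.rank D) : G.EquivEffective (D - E) :=
  (le_rank_iff hE.degree_nonneg).1 hle E hE rfl

end Rank

section ExtensionByZero

variable {G : Multigraph} {Vs : Finset G.V}

lemma iota_apply_of_mem (D : {x : G.V // x ∈ Vs} → ℤ) {x : G.V} (hx : x ∈ Vs) :
    G.iota Vs D x = D ⟨x, hx⟩ :=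
  dif_pos hx

lemma iota_apply_of_notMem (D : {x : G.V // x ∈ Vs} → ℤ) {x : G.V} (hx : x ∉ Vs) :
    G.iota Vs D x = 0 :=
  dif_neg hx

lemma Effective.iota {D : {x : G.V // x ∈ Vs} → ℤ} (hD : Effective D) :
    Effective (G.iota Vs D) := by
  intro x
  by_cases hx : x ∈ Vs
  · exact (hD ⟨x, hx⟩).trans_eq (iota_apply_of_mem D hx).symm
  · exact (iota_apply_of_notMem D hx).ge

variable (G Vs) in
/-- Extension by zero `ι_* : Div(H) → Div(G)` as a homomorphism of groups, where `H` is a subgraph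
of `G` with vertex set `Vs`. -/
def iotaHom : ({x : G.V // x ∈ Vs} → ℤ) →+ (G.V → ℤ) where
  toFun := G.iota Vs
  map_zero' := by
    funext x
    simp [iota]
  map_add' D D' := by
    funext x
    by_cases hx : x ∈ Vs <;> simp [iota, hx]

lemma degree_iota (D : {x : G.V // x ∈ Vs} → ℤ) : degree (G.iota Vs D) = degree D := by
  have hzero : ∀ x ∈ Finset.univ, x ∉ Vs → G.iota Vs D x = 0 :=
    fun _ _ hx ↦ iota_apply_of_notMem D hx
  calc degree (G.iota Vs D) = ∑ x ∈ Vs, G.iota Vs D x :=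
        (Finset.sum_subset Vs.subset_univ hzero).symm
    _ = ∑ x : {x // x ∈ Vs}, G.iota Vs D x := (Finset.sum_coe_sort Vs _).symm
    _ = degree D := Finset.sum_congr rfl fun x _ ↦ iota_apply_of_mem D x.2

lemma exists_effective_iota_add_iota_eq {V₁ V₂ : Finset G.V} (hcover : V₁ ∪ V₂ = Finset.univ)
    {E : G.V → ℤ} (hE : Effective E) :
    ∃ (A : {x // x ∈ V₁} → ℤ) (B : {x // x ∈ V₂} → ℤ),
      Effective A ∧ Effective B ∧ G.iota V₁ A + G.iota V₂ B = E := by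
  refine ⟨fun x ↦ E x, fun x ↦ if x.1 ∈ V₁ then 0 else E x, fun x ↦ hE x, fun x ↦ ?_, ?_⟩
  · dsimp only
    split_ifs
    exacts [le_rfl, hE x]
  · funext x
    have hx : x ∈ V₁ ∨ x ∈ V₂ := Finset.mem_union.1 (hcover ▸ Finset.mem_univ x)
    by_cases h₁ : x ∈ V₁ <;> by_cases h₂ : x ∈ V₂ <;> simp_all [Multigraph.iota]

end ExtensionByZero

section Subgraph

variable {G : Multigraph} {Vs : Finset G.V} {Es : Finset G.E}
  {h : ∀ e ∈ Es, (G.ends e).1 ∈ Vs ∧ (G.ends e).2 ∈ Vs}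

lemma orientedIncidence_subgraph (e : (G.subgraph Vs Es h).E) (w : (G.subgraph Vs Es h).V) :
    (G.subgraph Vs Es h).orientedIncidence e w = G.orientedIncidence e.1 w.1 :=
  congrArg₂ (· - ·) (if_congr Subtype.ext_iff rfl rfl) (if_congr Subtype.ext_iff rfl rfl)

lemma inter_subgraph {w : (G.subgraph Vs Es h).V}
    (hw : ∀ e ∉ Es, G.orientedIncidence e w.1 = 0) (u : (G.subgraph Vs Es h).V) :
    (G.subgraph Vs Es h).inter w u = G.inter w.1 u.1 := by
  simp only [inter_eq_neg_sum_orientedIncidence_mul, orientedIncidence_subgraph]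
  rw [← Finset.sum_subset Es.subset_univ fun e _ he ↦ by rw [hw e he, zero_mul],
    ← Finset.sum_coe_sort Es]
  rfl

lemma inter_eq_zero_of_notMem (h : ∀ e ∈ Es, (G.ends e).1 ∈ Vs ∧ (G.ends e).2 ∈ Vs) {w x : G.V}
    (hw : ∀ e ∉ Es, G.orientedIncidence e w = 0) (hx : x ∉ Vs) : G.inter w x = 0 := by
  rw [inter_eq_neg_sum_orientedIncidence_mul, neg_eq_zero]
  refine Finset.sum_eq_zero fun e _ ↦ ?_
  by_cases he : e ∈ Es
  · rw [orientedIncidence_eq_zero (ne_of_mem_of_not_mem (h e he).1 hx)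
      (ne_of_mem_of_not_mem (h e he).2 hx), mul_zero]
  · rw [hw e he, zero_mul]

lemma iota_T {w : (G.subgraph Vs Es h).V} (hw : ∀ e ∉ Es, G.orientedIncidence e w.1 = 0) :
    G.iota Vs ((G.subgraph Vs Es h).T w) = G.T w.1 := by
  funext x
  by_cases hx : x ∈ Vs
  · exact (iota_apply_of_mem _ hx).trans (inter_subgraph hw ⟨x, hx⟩)
  · exact (iota_apply_of_notMem _ hx).trans (inter_eq_zero_of_notMem h hw hx).symm

variable (G Vs Es) in
/-- A subgraph with vertices `Vs` and edges `Es` is attached to the rest of `G` at most at `v`: the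
edges outside `Es` that end in another vertex of `Vs` are loops. -/
def AttachedAt (v : G.V) : Prop :=
  ∀ w ∈ Vs, w ≠ v → ∀ e ∉ Es, G.orientedIncidence e w = 0

lemma attachedAt_of_inter_subset {Vs' : Finset G.V} {Es' : Finset G.E} {v : G.V}
    (h' : ∀ e ∈ Es', (G.ends e).1 ∈ Vs' ∧ (G.ends e).2 ∈ Vs') (hE : Es ∪ Es' = Finset.univ)
    (hv : Vs ∩ Vs' ⊆ {v}) : G.AttachedAt Vs Es v := by
  intro w hw hwv e he
  have he' : e ∈ Es' := (Finset.mem_union.1 (hE ▸ Finset.mem_univ e)).resolve_left he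
  have hw' : w ∉ Vs' := fun hw' ↦
    hwv (Finset.mem_singleton.1 (hv (Finset.mem_inter.2 ⟨hw, hw'⟩)))
  exact orientedIncidence_eq_zero (ne_of_mem_of_not_mem (h' e he').1 hw')
    (ne_of_mem_of_not_mem (h' e he').2 hw')

variable {v : G.V}

lemma AttachedAt.iota_T_mem_prin (hv : G.AttachedAt Vs Es v) (w : (G.subgraph Vs Es h).V) :
    G.iota Vs ((G.subgraph Vs Es h).T w) ∈ G.Prin := by
  have of_ne (u : (G.subgraph Vs Es h).V) (hu : u.1 ≠ v) :
      G.iota Vs ((G.subgraph Vs Es h).T u) ∈ G.Prin := by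
    rw [iota_T (hv u.1 u.2 hu)]
    exact G.T_mem_prin u.1
  by_cases hwv : w.1 = v
  · have hT : (G.subgraph Vs Es h).T w = -∑ u ∈ Finset.univ.erase w, (G.subgraph Vs Es h).T u :=
      eq_neg_of_add_eq_zero_left <|
        (Finset.add_sum_erase _ _ (Finset.mem_univ w)).trans (sum_T _)
    have hιT : G.iota Vs ((G.subgraph Vs Es h).T w) =
        -∑ u ∈ Finset.univ.erase w, G.iota Vs ((G.subgraph Vs Es h).T u) := by
      rw [hT]
      exact (map_neg (G.iotaHom Vs) _).trans (congrArg Neg.neg (map_sum (G.iotaHom Vs) _ _))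
    rw [hιT]
    refine neg_mem <| sum_mem fun u hu ↦ of_ne u fun huv ↦ ?_
    exact Finset.ne_of_mem_erase hu (Subtype.ext (huv.trans hwv.symm))
  · exact of_ne w hwv

lemma AttachedAt.iota_mem_prin (hv : G.AttachedAt Vs Es v) {D : (G.subgraph Vs Es h).V → ℤ}
    (hD : D ∈ (G.subgraph Vs Es h).Prin) : G.iota Vs D ∈ G.Prin := by
  have hle : (G.subgraph Vs Es h).Prin ≤ G.Prin.comap (G.iotaHom Vs) :=
    (AddSubgroup.closure_le _).2 <| Set.range_subset_iff.2 hv.iota_T_mem_prin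
  exact hle hD

lemma EquivEffective.iota {D : (G.subgraph Vs Es h).V → ℤ}
    (hD : (G.subgraph Vs Es h).EquivEffective D) (hv : G.AttachedAt Vs Es v) :
    G.EquivEffective (G.iota Vs D) := by
  obtain ⟨F, hF, hDF⟩ := hD
  have hsub : G.iota Vs (D - F) = G.iota Vs D - G.iota Vs F := map_sub (G.iotaHom Vs) D F
  exact ⟨G.iota Vs F, hF.iota, hsub ▸ hv.iota_mem_prin hDF⟩

lemma AttachedAt.equivEffective_iota_sub_iota (hv : G.AttachedAt Vs Es v) (hne : Vs.Nonempty)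
    {D A : (G.subgraph Vs Es h).V → ℤ} (hA : Effective A)
    (hle : degree A ≤ (G.subgraph Vs Es h).rank D) :
    G.EquivEffective (G.iota Vs D - G.iota Vs A) := by
  have : Nonempty (G.subgraph Vs Es h).V := hne.to_subtype
  have hsub : G.iota Vs (D - A) = G.iota Vs D - G.iota Vs A := map_sub (G.iotaHom Vs) D A
  exact hsub ▸ (equivEffective_sub_of_degree_le_rank hA hle).iota hv

end Subgraph

end Multigraph

open Multigraph in
theorem wedge_rank_ge_min_general {G : Multigraph} {V₁ V₂ : Finset G.V} {E₁ E₂ : Finset G.E}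
    (h₁ : ∀ e ∈ E₁, (G.ends e).1 ∈ V₁ ∧ (G.ends e).2 ∈ V₁)
    (h₂ : ∀ e ∈ E₂, (G.ends e).1 ∈ V₂ ∧ (G.ends e).2 ∈ V₂) (hne₁ : V₁.Nonempty)
    (hne₂ : V₂.Nonempty) (hV : V₁ ∪ V₂ = Finset.univ) (hE : E₁ ∪ E₂ = Finset.univ) {v : G.V}
    (hv : V₁ ∩ V₂ ⊆ {v}) (D₁ : (G.subgraph V₁ E₁ h₁).V → ℤ) (D₂ : (G.subgraph V₂ E₂ h₂).V → ℤ) :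
    min ((G.subgraph V₁ E₁ h₁).rank D₁) ((G.subgraph V₂ E₂ h₂).rank D₂) ≤
      G.rank (G.iota V₁ D₁ + G.iota V₂ D₂) := by
  have : Nonempty G.V := ⟨v⟩
  set k := min ((G.subgraph V₁ E₁ h₁).rank D₁) ((G.subgraph V₂ E₂ h₂).rank D₂)
  rcases lt_or_ge k 0 with hk | hk
  · exact (Int.le_sub_one_of_lt hk).trans (neg_one_le_rank _)
  refine (le_rank_iff hk).2 fun E hEff hdeg ↦ ?_
  obtain ⟨A, B, hA, hB, rfl⟩ := exists_effective_iota_add_iota_eq hV hEff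
  rw [degree_add, degree_iota, degree_iota] at hdeg
  have hAk : degree A ≤ k := by linarith [hB.degree_nonneg]
  have hBk : degree B ≤ k := by linarith [hA.degree_nonneg]
  have hv₁ : G.AttachedAt V₁ E₁ v := attachedAt_of_inter_subset h₂ hE hv
  have hv₂ : G.AttachedAt V₂ E₂ v :=
    attachedAt_of_inter_subset h₁ (Finset.union_comm E₁ E₂ ▸ hE) (Finset.inter_comm V₁ V₂ ▸ hv)
  rw [add_sub_add_comm]
  exact (hv₁.equivEffective_iota_sub_iota hne₁ hA (hAk.trans (min_le_left _ _))).add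
    (hv₂.equivEffective_iota_sub_iota hne₂ hB (hBk.trans (min_le_right _ _)))

open Multigraph in
/-- For a cut-vertex decomposition `G = H₁ ∨ H₂` of a connected graph,
`r_G(D₁ + D₂) ≥ min (r_{H₁}(D₁), r_{H₂}(D₂))`. -/
theorem wedge_rank_ge_min (G : Multigraph) (hG : G.Connected) (W : G.Wedge)
    (D1 : W.H1.V → ℤ) (D2 : W.H2.V → ℤ) :
    min (W.H1.rank D1) (W.H2.rank D2) ≤ G.rank (G.iota W.V1 D1 + G.iota W.V2 D2) := by
  exact wedge_rank_ge_min_general W.ends1 W.ends2 ⟨W.v, W.hv1⟩ ⟨W.v, W.hv2⟩ W.cover_V W.cover_E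
    W.inter_V.subset D1 D2
end

section
/- Let G be a connected graph with a cut vertex and corresponding decomposition G = H₁ ∨ H₂, let m, n be nonnegative integers, and let G^{(m,n)} = H₁^{(m)} ∨ H₂^{(n)} be the refinement of G obtained by inserting m vertices in the interior of every edge of H₁ and n vertices in the interior of every edge of H₂. Then the natural map σ*_{m,n}: Div(G) → Div(G^{(m,n)}) maps Prin(G) into Prin(G^{(m,n)}). -/
/-!
Principal divisors are exactly the `div(f)`, and `div(f)` is the boundary of the flow `grad f`.
Pushing a flow `s` to a refinement, with `s e` units through every piece of `e`, pushes its
boundary forward by `σ*`, because the inserted vertices receive as much as they send on. The new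
flow is a gradient as soon as `(k e + 1) * s e` is one on `G`: interpolate linearly along the edges.
For `s = grad f` and a wedge at `c`, rescale `f - f c` by `m + 1` on `H₁` and by `n + 1` on `H₂`;
the two functions agree at `c`, where both vanish.
-/

namespace Multigraph

variable (G : Multigraph)

/-- The gradient of a function on the vertices: its drop along each edge, from the first endpoint
to the second. -/
def grad (f : G.V → ℤ) (e : G.E) : ℤ := f (G.ends e).1 - f (G.ends e).2

/-- The boundary of a flow `s` on the edges: the divisor of its net outflow, where `s e` units run
from the first endpoint of `e` to the second. -/
def boundary (s : G.E → ℤ) : G.V → ℤ :=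
  ∑ e, s e • (Pi.single (G.ends e).1 1 - Pi.single (G.ends e).2 1)

theorem divOf_eq_boundary_grad (f : G.V → ℤ) : G.divOf f = G.boundary (G.grad f) := by
  ext w
  simp only [divOf, boundary, grad, Finset.sum_apply]
  refine Finset.sum_congr rfl fun e _ => ?_
  by_cases h₁ : (G.ends e).1 = w <;> by_cases h₂ : (G.ends e).2 = w <;>
    simp [h₁, h₂, eq_comm (a := w)]

theorem T_eq_neg_boundary_grad_single (v : G.V) :
    G.T v = -G.boundary (G.grad (Pi.single v 1)) := by
  ext w
  simp only [T, inter, boundary, grad, Pi.neg_apply, Finset.sum_apply]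
  split_ifs with hvw
  · subst hvw
    simp only [valency, numLoops, Finset.card_filter, Nat.cast_sum, Finset.mul_sum,
      ← Finset.sum_neg_distrib, ← Finset.sum_add_distrib]
    refine Finset.sum_congr rfl fun e _ => ?_
    rcases G.ends e with ⟨a, b⟩
    by_cases ha : a = v <;> by_cases hb : b = v <;>
      simp [ha, hb, eq_comm (a := v)]
  · simp only [numEdges, Finset.card_filter, Nat.cast_sum, ← Finset.sum_neg_distrib]
    refine Finset.sum_congr rfl fun e _ => ?_
    rcases G.ends e with ⟨a, b⟩
    by_cases ha : a = v <;> by_cases hb : b = v <;> by_cases ha' : a = w <;>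
      by_cases hb' : b = w <;> simp_all [Pi.single_apply, eq_comm]

theorem divOf_eq_sum_smul_T (f : G.V → ℤ) : G.divOf f = ∑ v, -f v • G.T v := by
  have grad_eq (e : G.E) : ∑ v, f v * G.grad (Pi.single v 1) e = G.grad f e := by
    simp [grad, mul_sub, Pi.single_apply]
  simp only [divOf_eq_boundary_grad, T_eq_neg_boundary_grad_single, neg_smul_neg, boundary,
    Finset.smul_sum, smul_smul]
  rw [Finset.sum_comm]
  simp only [← Finset.sum_smul, grad_eq]

theorem mem_prin_iff_exists_divOf {D : G.V → ℤ} : D ∈ G.Prin ↔ ∃ f, G.divOf f = D := by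
  rw [Prin, ← Submodule.span_int_eq_addSubgroupClosure, Submodule.mem_toAddSubgroup,
    Submodule.mem_span_range_iff_exists_fun]
  refine (Equiv.neg (G.V → ℤ)).exists_congr fun c => ?_
  simp [divOf_eq_sum_smul_T]

section Subdivide

variable (k : G.E → ℕ)

/-- The vertices met when running along the subdivided edge `e`: number `0` is the first endpoint
of `e`, numbers `1, …, k e` are the inserted vertices, and number `k e + 1` is the second endpoint
(as are, for convenience, all later ones). -/
def pathVertex (e : G.E) : ℕ → (G.subdivide k).V
  | 0 => Sum.inl (G.ends e).1
  | i + 1 => if h : i < k e then Sum.inr ⟨e, ⟨i, h⟩⟩ else Sum.inl (G.ends e).2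

theorem pathVertex_last (e : G.E) : G.pathVertex k e (k e + 1) = Sum.inl (G.ends e).2 :=
  dif_neg (lt_irrefl _)

theorem subdivide_ends (e : G.E) (i : Fin (k e + 1)) :
    (G.subdivide k).ends ⟨e, i⟩ = (G.pathVertex k e i, G.pathVertex k e (i + 1)) := by
  obtain ⟨i, hi⟩ := i
  refine Prod.ext ?_ ?_
  · cases i with
    | zero => rfl
    | succ i => simp [subdivide, pathVertex, Nat.lt_of_succ_lt_succ hi]
  · rcases (Nat.le_of_lt_succ hi).lt_or_eq with h | rfl
    · simp [subdivide, pathVertex, h, h.ne]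
    · simp [subdivide, pathVertex]

/-- The map `σ*`, bundled as a linear map so that it can be pushed through sums. -/
def subdivLinearMap : (G.V → ℤ) →ₗ[ℤ] ((G.subdivide k).V → ℤ) where
  toFun := G.subdivMap k
  map_add' D D' := by ext (_ | _) <;> rfl
  map_smul' c D := by
    ext (_ | _)
    exacts [rfl, (smul_zero c).symm]

theorem subdivMap_single (v : G.V) (c : ℤ) :
    G.subdivMap k (Pi.single v c) = Pi.single (Sum.inl v : (G.subdivide k).V) c :=
  Sum.elim_single_zero v c

theorem boundary_subdivide (s : G.E → ℤ) :
    (G.subdivide k).boundary (fun x => s x.1) = G.subdivMap k (G.boundary s) := by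
  have telescope (e : G.E) :
      (∑ i : Fin (k e + 1), (Pi.single (G.pathVertex k e i) 1 -
          Pi.single (G.pathVertex k e (i + 1)) 1) : (G.subdivide k).V → ℤ) =
        Pi.single (G.pathVertex k e 0) 1 - Pi.single (G.pathVertex k e (k e + 1)) 1 := by
    rw [← Finset.sum_range_sub' fun i => (Pi.single (G.pathVertex k e i) 1 : (G.subdivide k).V → ℤ),
      Finset.sum_range]
  calc
    _ = ∑ e, ∑ i : Fin (k e + 1), s e • (Pi.single (G.pathVertex k e i) (1 : ℤ) -
          Pi.single (G.pathVertex k e (i + 1)) 1) := by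
      refine (Fintype.sum_sigma _).trans
        (Finset.sum_congr rfl fun e _ => Finset.sum_congr rfl fun i _ => ?_)
      rw [subdivide_ends]
    _ = ∑ e, s e • (G.subdivMap k (Pi.single (G.ends e).1 1) -
          G.subdivMap k (Pi.single (G.ends e).2 1)) := by
      simp only [← Finset.smul_sum, telescope, pathVertex_last, subdivMap_single]
      rfl
    _ = G.subdivLinearMap k (G.boundary s) := by
      simp only [boundary, map_sum, map_smul, map_sub]
      rfl

/-- The function on the refinement that agrees with `F` on the old vertices and drops by `s e` at
each step along the subdivided edge `e`, starting from its first endpoint. -/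
def interpolate (F : G.V → ℤ) (s : G.E → ℤ) : (G.subdivide k).V → ℤ :=
  Sum.elim F fun p => F (G.ends p.1).1 - (p.2 + 1) * s p.1

variable {G k} {F : G.V → ℤ} {s : G.E → ℤ}

theorem interpolate_pathVertex (hF : ∀ e, G.grad F e = (k e + 1) * s e) (e : G.E) {i : ℕ}
    (hi : i ≤ k e + 1) :
    G.interpolate k F s (G.pathVertex k e i) = F (G.ends e).1 - i * s e := by
  cases i with
  | zero => simp [pathVertex, interpolate]
  | succ i =>
    rcases (Nat.le_of_succ_le_succ hi).lt_or_eq with h | rfl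
    · simp [pathVertex, interpolate, h]
    · have := hF e
      simp only [pathVertex_last, interpolate, grad, Sum.elim_inl] at this ⊢
      push_cast
      linarith

theorem grad_interpolate (hF : ∀ e, G.grad F e = (k e + 1) * s e) :
    (G.subdivide k).grad (G.interpolate k F s) = fun x => s x.1 := by
  ext ⟨e, i⟩
  simp only [grad, subdivide_ends, interpolate_pathVertex hF e i.isLt.le,
    interpolate_pathVertex hF e (Nat.succ_le_of_lt i.isLt)]
  push_cast
  ring

theorem subdivMap_boundary_mem_prin (hF : ∀ e, G.grad F e = (k e + 1) * s e) :
    G.subdivMap k (G.boundary s) ∈ (G.subdivide k).Prin := by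
  refine (mem_prin_iff_exists_divOf _).2 ⟨G.interpolate k F s, ?_⟩
  rw [divOf_eq_boundary_grad, grad_interpolate hF, boundary_subdivide]

end Subdivide

variable {G}

theorem exists_grad_eq_mul_grad {c : G.V} {V₁ V₂ : Finset G.V} {E₁ : Finset G.E}
    (hV : V₁ ∩ V₂ ⊆ {c}) (hE₁ : ∀ e ∈ E₁, (G.ends e).1 ∈ V₁ ∧ (G.ends e).2 ∈ V₁)
    (hE₂ : ∀ e ∉ E₁, (G.ends e).1 ∈ V₂ ∧ (G.ends e).2 ∈ V₂) (a b : ℤ) (f : G.V → ℤ) :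
    ∃ F, ∀ e, G.grad F e = (if e ∈ E₁ then a else b) * G.grad f e := by
  let F (x : G.V) : ℤ := (if x ∈ V₁ then a else b) * (f x - f c)
  have F_of_mem₁ {x} (hx : x ∈ V₁) : F x = a * (f x - f c) := by simp [F, hx]
  have F_of_mem₂ {x} (hx : x ∈ V₂) : F x = b * (f x - f c) := by
    by_cases hx₁ : x ∈ V₁
    · obtain rfl : x = c := Finset.mem_singleton.1 (hV (Finset.mem_inter.2 ⟨hx₁, hx⟩))
      simp [F]
    · simp [F, hx₁]
  refine ⟨F, fun e => ?_⟩
  by_cases he : e ∈ E₁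
  · simp only [grad, F_of_mem₁ (hE₁ e he).1, F_of_mem₁ (hE₁ e he).2, if_pos he]
    ring
  · simp only [grad, F_of_mem₂ (hE₂ e he).1, F_of_mem₂ (hE₂ e he).2, if_neg he]
    ring

end Multigraph

theorem wedge_subdivision_principal_general {G : Multigraph} {c : G.V} {V₁ V₂ : Finset G.V}
    {E₁ : Finset G.E} (hV : V₁ ∩ V₂ ⊆ {c})
    (hE₁ : ∀ e ∈ E₁, (G.ends e).1 ∈ V₁ ∧ (G.ends e).2 ∈ V₁)
    (hE₂ : ∀ e ∉ E₁, (G.ends e).1 ∈ V₂ ∧ (G.ends e).2 ∈ V₂)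
    (m n : ℕ) {D : G.V → ℤ} (hD : D ∈ G.Prin) :
    G.subdivMap (fun e => if e ∈ E₁ then m else n) D
      ∈ (G.subdivide (fun e => if e ∈ E₁ then m else n)).Prin := by
  obtain ⟨f, rfl⟩ := G.mem_prin_iff_exists_divOf.1 hD
  obtain ⟨F, hF⟩ := Multigraph.exists_grad_eq_mul_grad hV hE₁ hE₂ (m + 1) (n + 1) f
  rw [Multigraph.divOf_eq_boundary_grad]
  refine Multigraph.subdivMap_boundary_mem_prin (F := F) fun e => ?_
  rw [hF e]
  split_ifs <;> rfl

open Multigraph in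
/-- For a cut-vertex decomposition `G = H₁ ∨ H₂` of a connected graph
and the refinement `G^{(m,n)} = H₁^{(m)} ∨ H₂^{(n)}`, the natural map
`σ*_{m,n} : Div(G) → Div(G^{(m,n)})` maps `Prin(G)` into `Prin(G^{(m,n)})`. -/
theorem wedge_subdivision_principal (G : Multigraph) (hG : G.Connected) (W : G.Wedge)
    (m n : ℕ) (D : G.V → ℤ) (hD : D ∈ G.Prin) :
    G.subdivMap (fun e => if e ∈ W.E1 then m else n) D
      ∈ (G.subdivide (fun e => if e ∈ W.E1 then m else n)).Prin := by
  have mem_E2 (e : G.E) (he : e ∉ W.E1) : e ∈ W.E2 :=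
    (Finset.mem_union.1 (W.cover_E ▸ Finset.mem_univ e)).resolve_left he
  exact wedge_subdivision_principal_general W.inter_V.subset W.ends1
    (fun e he => W.ends2 e (mem_E2 e he)) m n hD
end
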